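/- Let m, N ≥ 1, and let K = Span{E_κ : κ ∈ Ω, κ_m = 0} ⊆ ℂ^Ω. Assume that the inequality dim R ≥ (2 − (m−1)/(N+m−1)) · dim(F ∩ R), with equality iff R = {0} or R = ℂ^Ω, holds for every ξ ∈ ℂ^m (with 1, ξ_1, …, ξ_m linearly independent over ℚ̄) and every subspace R of ℂ^Ω defined over ℚ̄ satisfying dim(F ∩ R ∩ K) ≥ 2·dim(F ∩ R) − dim R. Then this inequality (with the same equality characterization) holds for every such ξ ∈ ℂ^m and every subspace R of ℂ^Ω defined over ℚ̄. -/

import Mathlib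

open Polynomial

noncomputable section

/-- The weight `|κ| = κ₁ + … + κ_m` of a multi-index. -/
def wt {m : ℕ} (κ : Fin m → ℕ) : ℕ := ∑ j, κ j

/-- `κ ∈ Ω`, i.e. `N - 1 ≤ |κ| ≤ N`. -/
def inOmega (m N : ℕ) (κ : Fin m → ℕ) : Prop := N - 1 ≤ wt κ ∧ wt κ ≤ N

/-- `κ - e_j` (only meaningful when `κ j ≥ 1`; guarded at use sites). -/
def sub1 {m : ℕ} (κ : Fin m → ℕ) (j : Fin m) : Fin m → ℕ :=
  Function.update κ j (κ j - 1)

/-- The canonical basis vector `E_κ`. -/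
def Evec {m : ℕ} (κ : Fin m → ℕ) : (Fin m → ℕ) → ℂ := fun μ => if μ = κ then 1 else 0

/-- The vector `Z_κ = E_κ + ∑_j ξ_j E_{κ-e_j}` (with `E_{κ-e_j} = 0` when `κ_j = 0`). -/
def Zvec {m : ℕ} (ξ : Fin m → ℂ) (κ : Fin m → ℕ) : (Fin m → ℕ) → ℂ :=
  Evec κ + ∑ j : Fin m, (if κ j = 0 then 0 else ξ j • Evec (sub1 κ j))

/-- `ℂ^Ω`, realized as the space of families supported on
`Ω = {κ : N-1 ≤ |κ| ≤ N}` (the span of the `E_κ`, `κ ∈ Ω`). -/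
def OmegaSpace (m N : ℕ) : Submodule ℂ ((Fin m → ℕ) → ℂ) :=
  Submodule.span ℂ {v | ∃ κ, inOmega m N κ ∧ v = Evec κ}

/-- `F = Span{Z_κ : κ ∈ Θ} ⊆ ℂ^Ω`, where `Θ = {κ : |κ| = N}`. -/
def Fspace (m N : ℕ) (ξ : Fin m → ℂ) : Submodule ℂ ((Fin m → ℕ) → ℂ) :=
  Submodule.span ℂ {v | ∃ κ, wt κ = N ∧ v = Zvec ξ κ}

/-- A subspace of `ℂ^Ω` is defined over `ℚ̄` if it is spanned by vectors all of whose
coordinates are algebraic numbers (equivalently, it has a `ℂ`-basis of such vectors). -/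
def DefinedOverQbar {m : ℕ} (R : Submodule ℂ ((Fin m → ℕ) → ℂ)) : Prop :=
  ∃ s : Set ((Fin m → ℕ) → ℂ), (∀ v ∈ s, ∀ κ, IsAlgebraic ℚ (v κ)) ∧
    Submodule.span ℂ s = R

/-- `1, ξ₁, …, ξ_m` are linearly independent over `ℚ̄`. -/
def LinIndepOverQbar (m : ℕ) (ξ : Fin m → ℂ) : Prop :=
  ∀ (a : ℂ) (c : Fin m → ℂ), IsAlgebraic ℚ a → (∀ j, IsAlgebraic ℚ (c j)) →
    a + ∑ j : Fin m, c j * ξ j = 0 → a = 0 ∧ ∀ j, c j = 0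
/-- The dimension inequality of Theorem 5.1, together with its case of equality:
`dim R ≥ (2 - (m-1)/(N+m-1)) · dim(F ∩ R)`, with equality iff `R = {0}` or `R = ℂ^Ω`. -/
def RatIneq (m N : ℕ) (ξ : Fin m → ℂ) (R : Submodule ℂ ((Fin m → ℕ) → ℂ)) : Prop :=
  (2 - ((m : ℝ) - 1) / ((N : ℝ) + (m : ℝ) - 1)) *
      (Module.finrank ℂ ↥(Fspace m N ξ ⊓ R) : ℝ) ≤ (Module.finrank ℂ ↥R : ℝ) ∧
  ((Module.finrank ℂ ↥R : ℝ) =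
      (2 - ((m : ℝ) - 1) / ((N : ℝ) + (m : ℝ) - 1)) *
        (Module.finrank ℂ ↥(Fspace m N ξ ⊓ R) : ℝ) ↔
    R = ⊥ ∨ R = OmegaSpace m N)
/-- `K = Span{E_κ : κ ∈ Ω, κ_{j₀} = 0}`. -/
def Kspace (m N : ℕ) (j0 : Fin m) : Submodule ℂ ((Fin m → ℕ) → ℂ) :=
  Submodule.span ℂ {v | ∃ κ, inOmega m N κ ∧ κ j0 = 0 ∧ v = Evec κ}

theorem rank_nullity_aux {L W T β : Type*} [Field L] [AddCommGroup W] [Module L W] [Fintype β]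
    (R : Submodule L W) (b : β → W) (hb : LinearIndependent L b)
    (hR : Submodule.span L (Set.range b) = R) (f : W →ₗ[L] (T → L)) :
    Module.finrank L ↥(R ⊓ LinearMap.ker f) + (Matrix.of fun t i => f (b i) t).rank =
      Module.finrank L R := by
  classical
  set c := Fintype.linearCombination L b with hc
  have hcinj : Function.Injective c := linearIndependent_iff_injective_fintypeLinearCombination.1 hb
  have hcr : LinearMap.range c = R := by rw [hc, Fintype.range_linearCombination, hR]
  have hM : (Matrix.of fun t i => f (b i) t).mulVecLin = f ∘ₗ c := by
    refine LinearMap.ext fun x => ?_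
    ext t
    simp [c, Fintype.linearCombination_apply, Matrix.mulVec, dotProduct, mul_comm]
  have h1 := LinearMap.finrank_range_add_finrank_ker (f ∘ₗ c)
  have h2 : Module.finrank L (LinearMap.ker (f ∘ₗ c)) = Module.finrank L ↥(R ⊓ LinearMap.ker f) := by
    rw [LinearMap.ker_comp, ← hcr, ← Submodule.map_comap_eq]
    exact (Submodule.equivMapOfInjective c hcinj _).finrank_eq
  have h3 : Module.finrank L (β → L) = Module.finrank L R := by
    rw [← hcr]; exact (LinearEquiv.ofInjective c hcinj).finrank_eq
  rw [Matrix.rank, hM, ← h3, ← h1, h2, add_comm]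

theorem exists_matrix {k : Type*} [Field k] {n : ℕ} (l : Fin n) (v : Fin n → k) (hv : v ≠ 0) :
    ∃ A B : Matrix (Fin n) (Fin n) k, A * B = 1 ∧ B * A = 1 ∧ ∀ i, A i l = v i := by
  have hl : (Pi.single l 1 : Fin n → k) ≠ 0 := by simp
  let e1 := LinearEquiv.toSpanNonzeroSingleton k (Fin n → k) _ hl
  let e2 := LinearEquiv.toSpanNonzeroSingleton k (Fin n → k) _ hv
  obtain ⟨g, hg⟩ := Submodule.exists_linearEquiv_restrict_eq (e1.symm ≪≫ₗ e2)
  have hgl : g (Pi.single l 1) = v := by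
    have h1 : ((e1 1 : _) : Fin n → k) = Pi.single l 1 := by
      simp [e1, LinearEquiv.toSpanNonzeroSingleton_apply]
    have h2 := hg (e1 1)
    rw [h1] at h2
    rw [← h2]
    simp [e2, LinearEquiv.toSpanNonzeroSingleton_apply]
  refine ⟨LinearMap.toMatrix' g.toLinearMap, LinearMap.toMatrix' g.symm.toLinearMap, ?_, ?_, ?_⟩
  · rw [← LinearMap.toMatrix'_comp]; simp
  · rw [← LinearMap.toMatrix'_comp]; simp
  · intro i
    rw [LinearMap.toMatrix'_apply]
    exact congrFun hgl i

abbrev PW (n : ℕ) := (Fin n → ℕ) → ℂ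

def ee {n : ℕ} (j : Fin n) : Fin n → ℕ := Pi.single j 1

theorem wt_add {n : ℕ} (μ ν : Fin n → ℕ) : wt (μ + ν) = wt μ + wt ν := by
  simp [wt, Finset.sum_add_distrib]

theorem wt_ee {n : ℕ} (j : Fin n) : wt (ee j) = 1 := by
  simp [wt, ee]

theorem sub1_iff {n : ℕ} (κ μ : Fin n → ℕ) (j : Fin n) :
    (κ j ≠ 0 ∧ μ = sub1 κ j) ↔ μ + ee j = κ := by
  constructor
  · rintro ⟨h, rfl⟩
    ext i
    by_cases hi : i = j
    · subst hi; simp [sub1, ee]; omega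
    · simp [sub1, ee, hi]
  · rintro rfl
    refine ⟨by simp [ee], ?_⟩
    ext i
    by_cases hi : i = j
    · subst hi; simp [sub1, ee]
    · simp [sub1, ee, hi]

theorem Zvec_apply {n : ℕ} (ξ : Fin n → ℂ) (κ μ : Fin n → ℕ) :
    Zvec ξ κ μ = Evec κ μ + ∑ j, ξ j * Evec κ (μ + ee j) := by
  unfold Zvec
  rw [Pi.add_apply, Finset.sum_apply]
  congr 1
  refine Finset.sum_congr rfl fun j _ => ?_
  have := sub1_iff κ μ j
  unfold Evec
  by_cases h : κ j = 0
  · simp [h] at this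
    simp [h, this]
  · simp only [ne_eq, h, not_false_eq_true, true_and] at this
    simp [h, this]

def TT (n N : ℕ) : Finset (Fin n → ℕ) := Finset.piAntidiag Finset.univ N

theorem mem_TT {n N : ℕ} (κ : Fin n → ℕ) : κ ∈ TT n N ↔ wt κ = N := by
  simp [TT, wt]

theorem mem_supp_span {n : ℕ} (P : (Fin n → ℕ) → Prop) (M : ℕ) (hP : ∀ κ, P κ → wt κ ≤ M)
    (f : PW n) :
    f ∈ Submodule.span ℂ {v | ∃ κ, P κ ∧ v = Evec κ} ↔ ∀ κ, ¬ P κ → f κ = 0 := by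
  classical
  constructor
  · intro hf
    induction hf using Submodule.span_induction with
    | mem x h =>
      obtain ⟨κ, h, rfl⟩ := h
      intro μ hμ
      simp only [Evec, ite_eq_right_iff]
      rintro rfl; exact absurd h hμ
    | zero => simp
    | add x y _ _ h1 h2 => intro κ h; simp [h1 κ h, h2 κ h]
    | smul a x _ h1 => intro κ h; simp [h1 κ h]
  · intro h
    have : f = ∑ κ ∈ (Finset.range (M+1)).biUnion (TT n), if P κ then f κ • Evec κ else 0 := by
      ext μ
      rw [Finset.sum_apply]
      by_cases hμ : P μ
      · rw [Finset.sum_eq_single μ]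
        · simp [hμ, Evec]
        · intro κ _ hκ
          split_ifs
          · simp [Evec, Ne.symm hκ]
          · rfl
        · intro h'
          exfalso; apply h'
          simp [mem_TT]
          have := hP μ hμ
          omega
      · rw [h μ hμ, Finset.sum_eq_zero]
        intro κ _
        split_ifs with hκ
        · have : μ ≠ κ := by rintro rfl; exact hμ hκ
          simp [Evec, this]
        · rfl
    rw [this]
    refine Submodule.sum_mem _ fun κ _ => ?_
    split_ifs with hκ
    · exact Submodule.smul_mem _ _ (Submodule.subset_span ⟨κ, hκ, rfl⟩)
    · exact Submodule.zero_mem _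

theorem mem_Omega {n N : ℕ} (f : PW n) :
    f ∈ OmegaSpace n N ↔ ∀ κ, ¬ inOmega n N κ → f κ = 0 :=
  mem_supp_span _ N (fun _ h => h.2) f

theorem mem_K {n N : ℕ} (l : Fin n) (f : PW n) :
    f ∈ Kspace n N l ↔ ∀ κ, ¬ (inOmega n N κ ∧ κ l = 0) → f κ = 0 := by
  rw [← mem_supp_span _ N (fun _ h => h.1.2) f]
  simp only [Kspace, and_assoc]

instance omega_fin (n N : ℕ) : FiniteDimensional ℂ (OmegaSpace n N) := by
  classical
  refine FiniteDimensional.span_of_finite ℂ ?_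
  refine ((((Finset.range (N+1)).biUnion (TT n)).finite_toSet).image Evec).subset ?_
  rintro _ ⟨κ, h, rfl⟩
  refine ⟨κ, ?_, rfl⟩
  simp [mem_TT]
  have := h.2
  omega

/-- the operator `f ↦ (μ ↦ ∑ v_j f (μ + e_j))`. -/
def Dop {n : ℕ} (v : Fin n → ℂ) : PW n →ₗ[ℂ] PW n where
  toFun f μ := ∑ j, v j * f (μ + ee j)
  map_add' f g := by ext μ; simp [mul_add, Finset.sum_add_distrib]
  map_smul' c f := by
    ext μ; simp [Finset.mul_sum]
    refine Finset.sum_congr rfl fun j _ => by ring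

theorem Dop_apply {n : ℕ} (v : Fin n → ℂ) (f : PW n) (μ) :
    Dop v f μ = ∑ j, v j * f (μ + ee j) := rfl

theorem mem_F {n N : ℕ} (hN : 1 ≤ N) (ξ : Fin n → ℂ) (f : PW n) (hf : f ∈ OmegaSpace n N) :
    f ∈ Fspace n N ξ ↔ ∀ μ, wt μ = N - 1 → f μ = Dop ξ f μ := by
  rw [mem_Omega] at hf
  constructor
  · intro h
    clear hf
    induction h using Submodule.span_induction with
    | mem x h =>
      obtain ⟨κ, h, rfl⟩ := h
      intro μ hμ
      rw [Zvec_apply, Dop_apply]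
      have h1 : ∀ ν, wt ν ≠ wt κ → Evec κ ν = 0 := by
        intro ν hν
        have : ν ≠ κ := by rintro rfl; exact hν rfl
        simp [Evec, this]
      rw [h1 μ (by omega), zero_add]
      refine Finset.sum_congr rfl fun j _ => ?_
      rw [Zvec_apply, Finset.sum_eq_zero, add_zero]
      intro i _
      rw [h1, mul_zero]
      rw [wt_add, wt_add, wt_ee, wt_ee]; omega
    | zero => simp
    | add x y _ _ h1 h2 => intro κ h; simp [h1 κ h, h2 κ h]
    | smul a x _ h1 => intro κ h; simp [h1 κ h]
  · intro h
    have : f = ∑ κ ∈ TT n N, f κ • Zvec ξ κ := by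
      ext μ
      have hs : ∀ ν, ∑ κ ∈ TT n N, f κ * Evec κ ν = if wt ν = N then f ν else 0 := by
        intro ν
        simp [Evec, mem_TT]
      rw [Finset.sum_apply]
      simp only [Pi.smul_apply, smul_eq_mul, Zvec_apply, mul_add, Finset.sum_add_distrib, hs, Finset.mul_sum]
      rw [Finset.sum_comm]
      have : ∀ j, ∑ κ ∈ TT n N, f κ * (ξ j * Evec κ (μ + ee j)) = if wt μ + 1 = N then ξ j * f (μ + ee j) else 0 := by
        intro j
        have := hs (μ + ee j)
        rw [wt_add, wt_ee] at this
        rw [← mul_zero (ξ j), ← mul_ite, ← this, Finset.mul_sum]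
        refine Finset.sum_congr rfl fun κ _ => by ring
      simp only [this]
      by_cases h1 : wt μ = N
      · simp [h1]
      by_cases h2 : wt μ + 1 = N
      · simp only [h1, h2, if_true, if_false, zero_add]
        exact h μ (by omega)
      · simp only [h1, h2, if_false, Finset.sum_const_zero, add_zero]
        exact hf μ (by unfold inOmega; omega)
    rw [this]
    exact Submodule.sum_mem _ fun κ hκ => Submodule.smul_mem _ _
      (Submodule.subset_span ⟨κ, (mem_TT κ).1 hκ, rfl⟩)


theorem exists_PQ {k a b : Type*} [Field k] [Fintype a] [Fintype b] [DecidableEq a] [DecidableEq b]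
    (A : Matrix a b k) : ∃ (P : Matrix (Fin A.rank) a k) (Q : Matrix b (Fin A.rank) k),
      P * A * Q = 1 := by
  let f := A.toLin'
  have hs : A.rank = Module.finrank k (LinearMap.range f) := rfl
  let e : LinearMap.range f ≃ₗ[k] (Fin A.rank → k) :=
    LinearEquiv.ofFinrankEq _ _ (by rw [← hs]; simp)
  obtain ⟨g, hg⟩ := f.rangeRestrict.exists_rightInverse_of_surjective f.range_rangeRestrict
  obtain ⟨h, hh⟩ := (LinearMap.range f).subtype.exists_leftInverse_of_injective
    (Submodule.ker_subtype _)
  refine ⟨LinearMap.toMatrix' (e.toLinearMap ∘ₗ h), LinearMap.toMatrix' (g ∘ₗ e.symm.toLinearMap), ?_⟩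
  have hA : ∀ (P : Matrix (Fin A.rank) a k) (Q : Matrix b (Fin A.rank) k),
      P * A * Q = P * LinearMap.toMatrix' f * Q := by simp [f]
  rw [hA, ← LinearMap.toMatrix'_comp, ← LinearMap.toMatrix'_comp, ← LinearMap.toMatrix'_id]
  congr 1
  refine LinearMap.ext fun x => ?_
  have h1 : f (g (e.symm x)) = ((LinearMap.range f).subtype (e.symm x)) := by
    have := congrArg Subtype.val (LinearMap.congr_fun hg (e.symm x))
    simpa using this
  have h2 := LinearMap.congr_fun hh (e.symm x)
  simp only [LinearMap.comp_apply, LinearEquiv.coe_coe, LinearMap.id_apply] at h1 h2 ⊢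
  rw [h1, h2]; simp

theorem rank_spec {k L B a b : Type*} [Field k] [Field L] [CommRing B] [Algebra k B] [Fintype a]
    [Fintype b] (φ : B →ₐ[k] k) (ψ : B →+* L) (hψ : Function.Injective ψ) (A : Matrix a b B) :
    (A.map φ).rank ≤ (A.map ψ).rank := by
  classical
  obtain ⟨P, Q, h⟩ := exists_PQ (A.map φ)
  let P' := P.map (algebraMap k B)
  let Q' := Q.map (algebraMap k B)
  have h1 : (P' * A * Q').map φ = 1 := by
    have e1 : P'.map φ = P := by ext i j; simp [P']
    have e2 : Q'.map φ = Q := by ext i j; simp [Q']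
    rw [Matrix.map_mul, Matrix.map_mul, e1, e2, h]
  have h2 : (P' * A * Q').det ≠ 0 := by
    intro h0
    have := φ.toRingHom.map_det (P' * A * Q')
    rw [h0, map_zero] at this
    have h3 : φ.toRingHom.mapMatrix (P' * A * Q') = 1 := h1
    rw [h3] at this
    simp at this
  have h3 : ((P' * A * Q').map ψ).det ≠ 0 := by
    have := ψ.map_det (P' * A * Q')
    rw [RingHom.mapMatrix_apply] at this
    rw [← this]
    exact (map_ne_zero_iff ψ hψ).2 h2
  have h4 := Matrix.rank_of_det_ne_zero h3
  rw [Matrix.map_mul, Matrix.map_mul] at h4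
  have h5 := (Matrix.rank_mul_le_left (P'.map ψ * A.map ψ) (Q'.map ψ)).trans (Matrix.rank_mul_le_right (P'.map ψ) (A.map ψ))
  simp at h4
  omega

theorem rank_map_le' {k L a b : Type*} [Field k] [Field L] [Algebra k L] [Fintype a]
    [Fintype b] (A : Matrix a b k) :
    (A.map (algebraMap k L)).rank ≤ A.rank := by
  classical
  have hs : A.rank = Module.finrank k (LinearMap.range A.toLin') := rfl
  let f := A.toLin'
  let e : LinearMap.range f ≃ₗ[k] (Fin A.rank → k) :=
    LinearEquiv.ofFinrankEq _ _ (by rw [← hs]; simp)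
  have : A = LinearMap.toMatrix' ((LinearMap.range f).subtype ∘ₗ e.symm.toLinearMap) *
      LinearMap.toMatrix' (e.toLinearMap ∘ₗ f.rangeRestrict) := by
    rw [← LinearMap.toMatrix'_comp]
    have : (((LinearMap.range f).subtype ∘ₗ e.symm.toLinearMap) ∘ₗ (e.toLinearMap ∘ₗ f.rangeRestrict)) = f := by
      ext; simp
    rw [this]; simp [f]
  conv_lhs => rw [this, Matrix.map_mul]
  exact (Matrix.rank_mul_le_left _ _).trans ((Matrix.rank_le_card_width _).trans (by simp))

theorem exists_place {k L : Type*} [Field k] [Field L] [Algebra k L] [IsAlgClosed k]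
    {ι : Type*} [Fintype ι] (ξ : ι → L) (hξ : ∃ i, ¬ IsAlgebraic k (ξ i)) :
    ∃ j, ξ j ≠ 0 ∧ ∃ (B : Subalgebra k L) (y : B) (z : ι → B) (φ : B →ₐ[k] k),
      (y : L) = (ξ j)⁻¹ ∧ (∀ i, (z i : L) = ξ i / ξ j) ∧ φ y = 0 ∧ φ (z j) = 1 := by
  obtain ⟨i0, hi0⟩ := hξ
  have hx : ξ i0 ∉ (integralClosure k L).toSubring := fun h => hi0 (IsIntegral.isAlgebraic h)
  obtain ⟨V, hV, hxV⟩ := Subring.exists_le_valuationSubring_of_isIntegrallyClosedIn hx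
  have hk : ∀ c : k, algebraMap k L c ∈ V := fun c =>
    hV (show algebraMap k L c ∈ integralClosure k L from isIntegral_algebraMap)
  have : Nonempty ι := ⟨i0⟩
  obtain ⟨j, hj⟩ := Finite.exists_max (fun i => V.valuation (ξ i))
  have hj1 : 1 < V.valuation (ξ j) := by
    refine lt_of_lt_of_le ?_ (hj i0)
    rw [← V.valuation_le_one_iff] at hxV
    exact not_le.1 hxV
  have hj0 : ξ j ≠ 0 := by
    intro h; rw [h, map_zero] at hj1; exact absurd hj1 (by simp)
  have hjv : ξ j ∉ V := by
    rw [← V.valuation_le_one_iff]; exact not_le.2 hj1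
  refine ⟨j, hj0, ?_⟩
  have hy : (ξ j)⁻¹ ∈ V := (V.mem_or_inv_mem (ξ j)).resolve_left hjv
  have hz : ∀ i, ξ i / ξ j ∈ V := by
    intro i
    rw [← V.valuation_le_one_iff, map_div₀]
    exact div_le_one_of_le₀ (hj i) zero_le'
  let S : Set L := insert (ξ j)⁻¹ (Set.range fun i => ξ i / ξ j)
  have hSf : S.Finite := (Set.finite_range _).insert _
  let B := Algebra.adjoin k S
  have hBV : ∀ x ∈ B, x ∈ V := by
    intro x hx
    induction hx using Algebra.adjoin_induction with
    | mem x hx =>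
      rcases hx with rfl | ⟨i, rfl⟩
      · exact hy
      · exact hz i
    | algebraMap r => exact hk r
    | add x y _ _ h1 h2 => exact V.add_mem _ _ h1 h2
    | mul x y _ _ h1 h2 => exact V.mul_mem _ _ h1 h2
  let y : B := ⟨(ξ j)⁻¹, Algebra.subset_adjoin (Set.mem_insert _ _)⟩
  let z : ι → B := fun i => ⟨ξ i / ξ j, Algebra.subset_adjoin (Set.mem_insert_of_mem _ ⟨i, rfl⟩)⟩
  have hyu : y ∈ nonunits B := by
    intro hu
    obtain ⟨w, hw⟩ := isUnit_iff_exists_inv.1 hu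
    have h1 : (ξ j)⁻¹ * (w : L) = 1 := congrArg Subtype.val hw
    have h2 : (w : L) = ξ j := by field_simp at h1; exact h1
    exact hjv (h2 ▸ hBV _ w.2)
  obtain ⟨M, hM, hyM⟩ := exists_max_ideal_of_mem_nonunits hyu
  have : Algebra.FiniteType k B :=
    (Subalgebra.fg_iff_finiteType B).1 ⟨hSf.toFinset, by simp [B]⟩
  let := Ideal.Quotient.field M
  have := finite_of_finite_type_of_isJacobsonRing k (B ⧸ M)
  have hbij : Function.Bijective (algebraMap k (B ⧸ M)) :=
    IsAlgClosed.algebraMap_bijective_of_isIntegral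
  let e : k ≃ₐ[k] (B ⧸ M) := AlgEquiv.ofBijective (Algebra.ofId k (B ⧸ M)) hbij
  refine ⟨B, y, z, e.symm.toAlgHom.comp (Ideal.Quotient.mkₐ k M), rfl, fun i => rfl, ?_, ?_⟩
  · have : Ideal.Quotient.mkₐ k M y = 0 := Ideal.Quotient.eq_zero_iff_mem.2 hyM
    simp only [AlgHom.comp_apply, this, map_zero]
  · have : z j = 1 := Subtype.ext (div_self hj0)
    rw [this, map_one]

theorem rank_lemma {k L : Type*} [Field k] [Field L] [Algebra k L] [IsAlgClosed k]
    {ι a b : Type*} [Fintype ι] [Fintype a] [Fintype b]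
    (ξ : ι → L) (hξ : ∃ i, ¬ IsAlgebraic k (ξ i)) (M0 : Matrix a b k) (M : ι → Matrix a b k) :
    ∃ v : ι → k, v ≠ 0 ∧
      ((∑ i, v i • M i).map (algebraMap k L)).rank ≤
      (M0.map (algebraMap k L) + ∑ i, ξ i • (M i).map (algebraMap k L)).rank := by
  obtain ⟨j, hj0, B, y, z, φ, hy, hz, hφy, hφz⟩ := exists_place ξ hξ
  refine ⟨fun i => φ (z i), fun h => ?_, (rank_map_le' _).trans ?_⟩
  · have := congrFun h j
    simp [hφz] at this
  let A : Matrix a b B := y • M0.map (algebraMap k B) + ∑ i, z i • (M i).map (algebraMap k B)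
  have h1 : A.map φ = ∑ i, φ (z i) • M i := by
    ext s t
    simp [A, Matrix.sum_apply, hφy]
  have h2 : A.map B.val.toRingHom = (ξ j)⁻¹ • (M0.map (algebraMap k L) + ∑ i, ξ i • (M i).map (algebraMap k L)) := by
    ext s t
    simp [A, Matrix.sum_apply, hy, hz, mul_add, Finset.mul_sum]
    refine Finset.sum_congr rfl fun i _ => ?_
    change _ * algebraMap k L _ = _
    ring
  rw [← h1]
  refine (rank_spec φ B.val.toRingHom Subtype.val_injective A).trans ?_
  rw [h2, Matrix.rank_smul_of_mem_nonZeroDivisors]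
  exact mem_nonZeroDivisors_of_ne_zero (inv_ne_zero hj0)

abbrev QQ : IntermediateField ℚ ℂ := algebraicClosure ℚ ℂ

instance QQ_closed : IsAlgClosed QQ :=
  (algebraicClosure.isAlgClosure ℚ ℂ).isAlgClosed

def resT (n N : ℕ) : PW n →ₗ[ℂ] (↥(TT n (N - 1)) → ℂ) :=
  LinearMap.funLeft ℂ ℂ Subtype.val

theorem mem_ker_resT {n N : ℕ} (g : PW n →ₗ[ℂ] PW n) (f : PW n) :
    f ∈ LinearMap.ker (resT n N ∘ₗ g) ↔ ∀ μ, wt μ = N - 1 → g f μ = 0 := by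
  rw [LinearMap.mem_ker]
  constructor
  · intro h μ hμ
    exact congrFun h ⟨μ, (mem_TT μ).2 hμ⟩
  · intro h
    funext μ
    exact h μ.1 ((mem_TT _).1 μ.2)

theorem mem_QQ {x : ℂ} : x ∈ QQ ↔ IsAlgebraic ℚ x := mem_algebraicClosure_iff

theorem xi_transc {m : ℕ} (ξ : Fin (m + 1) → ℂ) (hξ : LinIndepOverQbar (m + 1) ξ) :
    ∃ i, ¬ IsAlgebraic QQ (ξ i) := by
  refine ⟨0, fun h => ?_⟩
  have h0 : @Algebra.IsAlgebraic ℚ QQ _ _ (IntermediateField.algebra' QQ) :=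
    algebraicClosure.isAlgebraic ℚ ℂ
  have h1 : IsAlgebraic ℚ (ξ 0) := @IsAlgebraic.restrictScalars ℚ QQ ℂ _ _ _ (IntermediateField.algebra' QQ) _ _ _ _ h0 (ξ 0) h
  have := hξ (-ξ 0) (Pi.single 0 1) h1.neg (fun j => ?_) ?_
  · have := this.2 0
    simp at this
  · by_cases hj : j = 0
    · subst hj; simpa using isAlgebraic_one
    · simpa [hj] using isAlgebraic_zero
  · simp [Pi.single_apply]

theorem exists_v {m N : ℕ} (hN : 1 ≤ N) (ξ : Fin (m + 1) → ℂ) (hξ : LinIndepOverQbar (m + 1) ξ)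
    (R : Submodule ℂ (PW (m + 1))) (hR : R ≤ OmegaSpace (m + 1) N) (hQ : DefinedOverQbar R) :
    ∃ v : Fin (m + 1) → QQ, v ≠ 0 ∧
      2 * Module.finrank ℂ ↥(Fspace (m + 1) N ξ ⊓ R) ≤ Module.finrank ℂ R +
        Module.finrank ℂ ↥((Fspace (m + 1) N ξ ⊓ R) ⊓
          LinearMap.ker (resT (m + 1) N ∘ₗ Dop (fun i => (v i : ℂ)))) := by
  obtain ⟨s, hs, hsR⟩ := hQ
  obtain ⟨b, hbs, hb, hbi⟩ := exists_linearIndependent ℂ s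
  rw [hsR] at hb
  have hfR : FiniteDimensional ℂ R := Submodule.finiteDimensional_of_le hR
  have hbR : ∀ i : b, (i : PW (m + 1)) ∈ R := fun i => hb ▸ Submodule.subset_span i.2
  have hfin : Finite b := by
    have : LinearIndependent ℂ (fun i : b => (⟨i, hbR i⟩ : R)) := by
      refine LinearIndependent.of_comp R.subtype ?_
      exact hbi
    exact this.finite
  have := Fintype.ofFinite b
  let β : b → (Fin (m + 1) → ℕ) → QQ := fun i κ => ⟨(i : PW (m + 1)) κ, mem_QQ.2 (hs _ (hbs i.2) κ)⟩
  let M0 : Matrix ↥(TT (m + 1) (N - 1)) b QQ := Matrix.of fun t i => - β i t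
  let M : Fin (m + 1) → Matrix ↥(TT (m + 1) (N - 1)) b QQ := fun j =>
    Matrix.of fun t i => β i (t + ee j)
  obtain ⟨v, hv, hrk⟩ := rank_lemma ξ (xi_transc ξ hξ) M0 M
  refine ⟨v, hv, ?_⟩
  have hspan : Submodule.span ℂ (Set.range (Subtype.val : b → PW (m + 1))) = R := by
    rw [Subtype.range_coe]; exact hb
  have e1 := rank_nullity_aux R _ hbi hspan (resT (m + 1) N ∘ₗ (Dop ξ - LinearMap.id))
  have e2 := rank_nullity_aux R _ hbi hspan (resT (m + 1) N ∘ₗ Dop (fun i => (v i : ℂ)))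
  have hF : R ⊓ LinearMap.ker (resT (m + 1) N ∘ₗ (Dop ξ - LinearMap.id)) =
      Fspace (m + 1) N ξ ⊓ R := by
    ext f
    rw [Submodule.mem_inf, Submodule.mem_inf, mem_ker_resT, and_comm]
    refine and_congr_left fun hf => ?_
    rw [mem_F hN ξ f (hR hf)]
    refine forall₂_congr fun μ hμ => ?_
    rw [LinearMap.sub_apply, Pi.sub_apply, sub_eq_zero, eq_comm]; rfl
  have m1 : (Matrix.of fun t (i : b) => (resT (m + 1) N ∘ₗ (Dop ξ - LinearMap.id)) (i : PW (m + 1)) t) =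
      M0.map (algebraMap QQ ℂ) + ∑ i, ξ i • (M i).map (algebraMap QQ ℂ) := by
    ext t i
    simp only [Matrix.add_apply, Matrix.sum_apply, Matrix.smul_apply, Matrix.map_apply, M, M0,
      Matrix.of_apply, map_neg]
    change Dop ξ i t - (i : PW (m + 1)) t = - (i : PW (m + 1)) t + ∑ j, ξ j * (i : PW (m + 1)) (t + ee j)
    rw [Dop_apply]; ring
  have m2 : (Matrix.of fun t (i : b) => (resT (m + 1) N ∘ₗ Dop (fun i => (v i : ℂ))) (i : PW (m + 1)) t) =
      (∑ i, v i • M i).map (algebraMap QQ ℂ) := by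
    ext t i
    simp only [Matrix.sum_apply, Matrix.smul_apply, Matrix.map_apply, M,
      Matrix.of_apply, map_sum, smul_eq_mul, map_mul]
    rfl
  rw [m1, hF] at e1
  rw [m2] at e2
  set G := LinearMap.ker (resT (m + 1) N ∘ₗ Dop (fun i => (v i : ℂ)))
  set F := Fspace (m + 1) N ξ
  have hf1 : FiniteDimensional ℂ ↥(F ⊓ R) := Submodule.finiteDimensional_of_le inf_le_right
  have hf2 : FiniteDimensional ℂ ↥(R ⊓ G) := Submodule.finiteDimensional_of_le inf_le_left
  have e3 := Submodule.finrank_sup_add_finrank_inf_eq (F ⊓ R) (R ⊓ G)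
  have e4 : Module.finrank ℂ ↥((F ⊓ R) ⊔ (R ⊓ G)) ≤ Module.finrank ℂ R :=
    Submodule.finrank_mono (sup_le inf_le_right inf_le_left)
  have e5 : (F ⊓ R) ⊓ (R ⊓ G) = (F ⊓ R) ⊓ G := by
    rw [← inf_assoc, inf_assoc F R R, inf_idem]
  rw [e5] at e3
  have e1a : Module.finrank ℂ ↥(F ⊓ R) + (M0.map (algebraMap QQ ℂ) +
      ∑ i, ξ i • (M i).map (algebraMap QQ ℂ)).rank = Module.finrank ℂ R := e1
  have e2a : Module.finrank ℂ ↥(R ⊓ G) + ((∑ i, v i • M i).map (algebraMap QQ ℂ)).rank =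
    Module.finrank ℂ R := e2
  have e3a : Module.finrank ℂ ↥((F ⊓ R) ⊔ (R ⊓ G)) + Module.finrank ℂ ↥((F ⊓ R) ⊓ G) =
    Module.finrank ℂ ↥(F ⊓ R) + Module.finrank ℂ ↥(R ⊓ G) := e3
  clear e1 e2 e3
  omega

open MvPolynomial in
def Psi (n : ℕ) : MvPolynomial (Fin n) ℂ →ₗ[ℂ] PW n where
  toFun p κ := (∏ j, ((κ j).factorial : ℂ)) * coeff (Finsupp.equivFunOnFinite.symm κ) p
  map_add' p q := by ext κ; simp [mul_add]
  map_smul' c p := by ext κ; simp; ring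

open MvPolynomial in
theorem Psi_apply {n : ℕ} (p : MvPolynomial (Fin n) ℂ) (κ : Fin n → ℕ) : Psi n p κ =
    (∏ j, ((κ j).factorial : ℂ)) * coeff (Finsupp.equivFunOnFinite.symm κ) p := rfl

theorem fac_ne {n : ℕ} (κ : Fin n → ℕ) : (∏ j, ((κ j).factorial : ℂ)) ≠ 0 :=
  Finset.prod_ne_zero_iff.2 fun j _ => by exact_mod_cast (κ j).factorial_ne_zero

open MvPolynomial in
theorem Psi_eq_zero_iff {n : ℕ} (p : MvPolynomial (Fin n) ℂ) (κ : Fin n → ℕ) :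
    Psi n p κ = 0 ↔ coeff (Finsupp.equivFunOnFinite.symm κ) p = 0 := by
  rw [Psi_apply, mul_eq_zero, or_iff_right (fac_ne κ)]

theorem Psi_inj (n : ℕ) : Function.Injective (Psi n) := by
  rw [injective_iff_map_eq_zero]
  intro p hp
  ext s
  have := (Psi_eq_zero_iff p (Finsupp.equivFunOnFinite s)).1 (congrFun hp _)
  simpa using this

open MvPolynomial in
theorem Psi_pderiv {n : ℕ} (j : Fin n) (p : MvPolynomial (Fin n) ℂ) (κ : Fin n → ℕ) :
    Psi n (pderiv j p) κ = Psi n p (κ + ee j) := by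
  rw [Psi_apply, Psi_apply, coeff_pderiv]
  have h1 : (Finsupp.equivFunOnFinite.symm (κ + ee j) : Fin n →₀ ℕ) =
      Finsupp.equivFunOnFinite.symm κ + Finsupp.single j 1 := by
    ext i
    simp [ee, Finsupp.single_apply, Pi.single_apply, eq_comm]
  have h2 : (∏ i, (((κ + ee j) i).factorial : ℂ)) = (∏ i, ((κ i).factorial : ℂ)) * (κ j + 1) := by
    rw [← Finset.mul_prod_erase _ _ (Finset.mem_univ j),
      ← Finset.mul_prod_erase _ (fun i => ((κ i).factorial : ℂ)) (Finset.mem_univ j)]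
    have : ∏ x ∈ Finset.univ.erase j, (((κ + ee j) x).factorial : ℂ) =
        ∏ x ∈ Finset.univ.erase j, ((κ x).factorial : ℂ) := by
      refine Finset.prod_congr rfl fun x hx => ?_
      simp [ee, Finset.ne_of_mem_erase hx]
    rw [this]
    simp [ee, Nat.factorial_succ]
    ring
  rw [h1, h2]
  simp
  ring

open MvPolynomial in
def DP {n : ℕ} (v : Fin n → ℂ) : MvPolynomial (Fin n) ℂ →ₗ[ℂ] MvPolynomial (Fin n) ℂ :=
  ∑ j, v j • (pderiv j).toLinearMap

open MvPolynomial in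
theorem DP_apply {n : ℕ} (v : Fin n → ℂ) (p : MvPolynomial (Fin n) ℂ) :
    DP v p = ∑ j, v j • pderiv j p := by
  simp [DP]

theorem Psi_DP {n : ℕ} (v : Fin n → ℂ) (p : MvPolynomial (Fin n) ℂ) :
    Psi n (DP v p) = Dop v (Psi n p) := by
  ext κ
  rw [DP_apply, map_sum, Finset.sum_apply, Dop_apply]
  simp [Psi_pderiv]

open MvPolynomial in
theorem Psi_hc {n : ℕ} (d : ℕ) (p : MvPolynomial (Fin n) ℂ) :
    homogeneousComponent d p = 0 ↔ ∀ μ, wt μ = d → Psi n p μ = 0 := by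
  have hd : ∀ s : Fin n →₀ ℕ, s.degree = wt s := by
    intro s; rw [Finsupp.degree_eq_sum]; rfl
  constructor
  · intro h μ hμ
    rw [Psi_eq_zero_iff]
    have := congrArg (MvPolynomial.coeff (Finsupp.equivFunOnFinite.symm μ)) h
    rw [coeff_homogeneousComponent, hd, if_pos (by simpa using hμ)] at this
    simpa using this
  · intro h
    ext s
    rw [coeff_homogeneousComponent, hd]
    split_ifs with hs
    · have := (Psi_eq_zero_iff p _).1 (h s hs)
      simpa using this
    · simp

theorem Omega_le_range (n N : ℕ) : OmegaSpace n N ≤ LinearMap.range (Psi n) := by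
  classical
  refine Submodule.span_le.2 ?_
  rintro _ ⟨κ, h, rfl⟩
  refine ⟨MvPolynomial.monomial (Finsupp.equivFunOnFinite.symm κ)
    (∏ j, ((κ j).factorial : ℂ))⁻¹, ?_⟩
  ext μ
  rw [Psi_apply, MvPolynomial.coeff_monomial]
  by_cases hμ : μ = κ
  · subst hμ; simp [Evec, mul_inv_cancel₀ (fac_ne _)]
  · have : ¬ κ = μ := fun h => hμ h.symm
    simp [Evec, hμ, this]

open MvPolynomial in
theorem mem_comap_Omega {n N : ℕ} (p : MvPolynomial (Fin n) ℂ) :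
    Psi n p ∈ OmegaSpace n N ↔ ∀ d, ¬ (N - 1 ≤ d ∧ d ≤ N) → homogeneousComponent d p = 0 := by
  rw [mem_Omega]
  constructor
  · intro h d hd
    rw [Psi_hc]
    rintro μ rfl
    exact h μ hd
  · intro h κ hκ
    exact (Psi_hc _ p).1 (h (wt κ) hκ) κ rfl

open MvPolynomial in
theorem mem_comap_F {n N : ℕ} (hN : 1 ≤ N) (ξ : Fin n → ℂ) (p : MvPolynomial (Fin n) ℂ)
    (hp : Psi n p ∈ OmegaSpace n N) :
    Psi n p ∈ Fspace n N ξ ↔ homogeneousComponent (N - 1) (p - DP ξ p) = 0 := by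
  rw [mem_F hN ξ _ hp, Psi_hc]
  refine forall₂_congr fun μ _ => ?_
  rw [map_sub, Psi_DP, Pi.sub_apply, sub_eq_zero]

theorem mem_K_of {n N : ℕ} (hN : 1 ≤ N) (ξ : Fin n → ℂ) (l : Fin n) (f : PW n)
    (hf : f ∈ OmegaSpace n N) (hF : f ∈ Fspace n N ξ)
    (h : ∀ μ, wt μ = N - 1 → f (μ + ee l) = 0) : f ∈ Kspace n N l := by
  rw [mem_F hN ξ f hf] at hF
  rw [mem_Omega] at hf
  rw [mem_K]
  have h1 : ∀ κ, wt κ = N → κ l ≠ 0 → f κ = 0 := by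
    intro κ hκ hl
    obtain h2 := (sub1_iff κ (sub1 κ l) l).1 ⟨hl, rfl⟩
    rw [← h2]
    apply h
    have := congrArg wt h2
    rw [wt_add, wt_ee] at this
    omega
  intro κ hκ
  by_cases ho : inOmega n N κ
  · have hl : κ l ≠ 0 := fun h => hκ ⟨ho, h⟩
    by_cases hw : wt κ = N
    · exact h1 κ hw hl
    · have hw' : wt κ = N - 1 := by have := ho.1; have := ho.2; omega
      rw [hF κ hw', Dop_apply]
      refine Finset.sum_eq_zero fun j _ => ?_
      rw [h1, mul_zero]
      · rw [wt_add, wt_ee]; omega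
      · simp; omega
  · exact hf κ ho

open MvPolynomial in
def sig {k : Type*} [CommRing k] {n : ℕ} (A : Matrix (Fin n) (Fin n) k) :
    MvPolynomial (Fin n) k →ₐ[k] MvPolynomial (Fin n) k :=
  MvPolynomial.aeval (fun i => ∑ j, MvPolynomial.C (A i j) * MvPolynomial.X j)

theorem sig_X {k : Type*} [CommRing k] {n : ℕ} (A : Matrix (Fin n) (Fin n) k) (i : Fin n) :
    sig A (MvPolynomial.X i) = ∑ j, MvPolynomial.C (A i j) * MvPolynomial.X j := by
  simp [sig]

theorem sig_C {k : Type*} [CommRing k] {n : ℕ} (A : Matrix (Fin n) (Fin n) k) (c : k) :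
    sig A (MvPolynomial.C c) = MvPolynomial.C c := by
  simp [sig, MvPolynomial.algebraMap_eq]

theorem sig_comp {k : Type*} [CommRing k] {n : ℕ} (A B : Matrix (Fin n) (Fin n) k)
    (p : MvPolynomial (Fin n) k) : sig A (sig B p) = sig (B * A) p := by
  have : (sig A).comp (sig B) = sig (B * A) := by
    refine MvPolynomial.algHom_ext fun i => ?_
    rw [AlgHom.comp_apply, sig_X, sig_X, map_sum]
    simp only [map_mul, sig_C, sig_X, Matrix.mul_apply, map_sum, Finset.mul_sum, Finset.sum_mul]
    rw [Finset.sum_comm]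
    simp only [mul_assoc]
  exact DFunLike.congr_fun this p

theorem sig_one {k : Type*} [CommRing k] {n : ℕ} (p : MvPolynomial (Fin n) k) :
    sig (1 : Matrix (Fin n) (Fin n) k) p = p := by
  have : sig (1 : Matrix (Fin n) (Fin n) k) = AlgHom.id k _ := by
    refine MvPolynomial.algHom_ext fun i => ?_
    rw [sig_X]
    simp [Matrix.one_apply]
  rw [this]; rfl

theorem sig_map {k L : Type*} [CommRing k] [CommRing L] (f : k →+* L) {n : ℕ}
    (A : Matrix (Fin n) (Fin n) k)
    (p : MvPolynomial (Fin n) k) :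
    MvPolynomial.map f (sig A p) = sig (A.map f) (MvPolynomial.map f p) := by
  induction p using MvPolynomial.induction_on with
  | C a => simp [sig_C]
  | add p q hp hq => simp [hp, hq]
  | mul_X p i hp => simp [hp, sig_X]

theorem sig_pderiv {n : ℕ} (A : Matrix (Fin n) (Fin n) ℂ) (j : Fin n)
    (p : MvPolynomial (Fin n) ℂ) :
    MvPolynomial.pderiv j (sig A p) = ∑ i, A i j • sig A (MvPolynomial.pderiv i p) := by
  induction p using MvPolynomial.induction_on with
  | C a => simp [sig_C]
  | add p q hp hq => simp [hp, hq, Finset.sum_add_distrib]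
  | mul_X p i hp =>
    rw [map_mul, MvPolynomial.pderiv_mul, hp]
    have h1 : MvPolynomial.pderiv j (sig A (MvPolynomial.X i)) = MvPolynomial.C (A i j) := by
      rw [sig_X, map_sum, Finset.sum_eq_single j]
      · rw [MvPolynomial.pderiv_C_mul, MvPolynomial.pderiv_X_self, mul_one]
      · intro b _ hb
        rw [MvPolynomial.pderiv_C_mul, MvPolynomial.pderiv_X_of_ne hb, mul_zero]
      · simp
    have h2 : ∀ x, A x j • sig A (MvPolynomial.pderiv x (p * MvPolynomial.X i)) =
        (A x j • sig A (MvPolynomial.pderiv x p)) * sig A (MvPolynomial.X i) +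
          (if x = i then sig A p * MvPolynomial.C (A i j) else 0) := by
      intro x
      rw [MvPolynomial.pderiv_mul, map_add, map_mul, smul_add, smul_mul_assoc]
      congr 1
      split_ifs with h
      · subst h
        rw [MvPolynomial.pderiv_X_self, mul_one, MvPolynomial.smul_eq_C_mul, mul_comm]
      · rw [MvPolynomial.pderiv_X_of_ne (Ne.symm h), mul_zero, map_zero, smul_zero]
    rw [h1, Finset.sum_congr rfl fun x _ => h2 x, Finset.sum_add_distrib, Finset.sum_mul]
    simp

theorem sig_DP {n : ℕ} (A : Matrix (Fin n) (Fin n) ℂ) (ξ : Fin n → ℂ)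
    (p : MvPolynomial (Fin n) ℂ) :
    DP ξ (sig A p) = sig A (DP (A.mulVec ξ) p) := by
  rw [DP_apply, DP_apply, map_sum]
  simp only [sig_pderiv, map_sum, map_smul, Finset.smul_sum, Matrix.mulVec, dotProduct, Finset.sum_smul]
  rw [Finset.sum_comm]
  simp only [smul_smul, mul_comm]

theorem sig_hom {k : Type*} [CommRing k] {n : ℕ} (A : Matrix (Fin n) (Fin n) k) (d : ℕ)
    (p : MvPolynomial (Fin n) k) (hp : p.IsHomogeneous d) : (sig A p).IsHomogeneous d := by
  have := hp.aeval (n := 1) (fun i => ∑ j, MvPolynomial.C (A i j) * MvPolynomial.X j) (fun i => ?_)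
  · rw [one_mul] at this; exact this
  · refine MvPolynomial.IsHomogeneous.sum _ _ _ fun j _ => ?_
    have := (MvPolynomial.isHomogeneous_C (Fin n) (A i j)).mul (MvPolynomial.isHomogeneous_X k j)
    simpa using this

theorem sig_hc {k : Type*} [CommRing k] {n : ℕ} (A : Matrix (Fin n) (Fin n) k) (d : ℕ)
    (p : MvPolynomial (Fin n) k) :
    MvPolynomial.homogeneousComponent d (sig A p) =
      sig A (MvPolynomial.homogeneousComponent d p) := by
  induction p using MvPolynomial.induction_on' with
  | add p q hp hq => simp [hp, hq]
  | monomial s a =>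
    have h := MvPolynomial.isHomogeneous_monomial (σ := Fin n) (d := s) a rfl
    have h2 := sig_hom A _ _ h
    rw [MvPolynomial.homogeneousComponent_of_mem h, MvPolynomial.homogeneousComponent_of_mem h2]
    split_ifs <;> simp

theorem linIndep_transfer {n : ℕ} (A B : Matrix (Fin n) (Fin n) ℂ) (hBA : B * A = 1)
    (hB : ∀ i j, IsAlgebraic ℚ (B i j)) (ξ : Fin n → ℂ) (h : LinIndepOverQbar n ξ) :
    LinIndepOverQbar n (B.mulVec ξ) := by
  intro a c ha hc hac
  have h1 := h a (Matrix.vecMul c B) ha (fun j => ?_) ?_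
  · refine ⟨h1.1, fun j => ?_⟩
    have h2 : Matrix.vecMul c B = 0 := funext h1.2
    have h3 : Matrix.vecMul (Matrix.vecMul c B) A = c := by
      rw [Matrix.vecMul_vecMul, hBA, Matrix.vecMul_one]
    rw [h2, Matrix.zero_vecMul] at h3
    rw [← h3]; rfl
  · rw [← mem_QQ]
    change (∑ i, c i * B i j) ∈ QQ
    exact sum_mem fun i _ => mul_mem (mem_QQ.2 (hc i)) (mem_QQ.2 (hB i j))
  · have h2 : c ⬝ᵥ (B.mulVec ξ) = (Matrix.vecMul c B) ⬝ᵥ ξ := Matrix.dotProduct_mulVec c B ξ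
    change a + (Matrix.vecMul c B) ⬝ᵥ ξ = 0
    rw [← h2]; exact hac

theorem alg_coeff {n : ℕ} (A : Matrix (Fin n) (Fin n) QQ) (p : MvPolynomial (Fin n) ℂ)
    (hp : ∀ κ, IsAlgebraic ℚ (Psi n p κ)) (κ : Fin n → ℕ) :
    IsAlgebraic ℚ (Psi n (sig (A.map (algebraMap QQ ℂ)) p) κ) := by
  have hfac : ∀ κ : Fin n → ℕ, (∏ j, ((κ j).factorial : ℂ)) ∈ QQ := fun κ =>
    prod_mem fun j _ => natCast_mem QQ _
  have hp' : p ∈ Set.range (MvPolynomial.map (algebraMap QQ ℂ)) := by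
    rw [MvPolynomial.mem_range_map_iff_coeffs_subset]
    intro x hx
    rw [MvPolynomial.coeffs] at hx
    simp only [Finset.coe_image, Set.mem_image] at hx
    obtain ⟨s, _, rfl⟩ := hx
    have h1 := Psi_apply p (Finsupp.equivFunOnFinite s)
    rw [Equiv.symm_apply_apply] at h1
    have h2 : MvPolynomial.coeff s p ∈ QQ := by
      have h3 := mul_mem (inv_mem (hfac (Finsupp.equivFunOnFinite s)))
        (mem_QQ.2 (hp (Finsupp.equivFunOnFinite s)))
      rw [h1, inv_mul_cancel_left₀ (fac_ne _)] at h3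
      exact h3
    exact ⟨⟨_, h2⟩, rfl⟩
  obtain ⟨p0, rfl⟩ := hp'
  rw [← sig_map, Psi_apply, MvPolynomial.coeff_map, ← mem_QQ]
  exact mul_mem (hfac κ) (SetLike.coe_mem _)

theorem main_aux (m N : ℕ) (hN : 1 ≤ N)
    (H : ∀ ξ : Fin (m + 1) → ℂ, LinIndepOverQbar (m + 1) ξ →
      ∀ R : Submodule ℂ (PW (m + 1)), R ≤ OmegaSpace (m + 1) N →
        DefinedOverQbar R →
        2 * (Module.finrank ℂ ↥(Fspace (m + 1) N ξ ⊓ R) : ℝ) -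
            (Module.finrank ℂ ↥R : ℝ) ≤
          (Module.finrank ℂ ↥(Fspace (m + 1) N ξ ⊓ R ⊓
              Kspace (m + 1) N (Fin.last m)) : ℝ) →
        RatIneq (m + 1) N ξ R)
    (ξ : Fin (m + 1) → ℂ) (hξ : LinIndepOverQbar (m + 1) ξ)
    (R : Submodule ℂ (PW (m + 1))) (hR : R ≤ OmegaSpace (m + 1) N)
    (hQ : DefinedOverQbar R) : RatIneq (m + 1) N ξ R := by
  obtain ⟨v, hv, hdim⟩ := exists_v hN ξ hξ R hR hQ
  obtain ⟨A0, B0, hAB0, hBA0, hA0⟩ := exists_matrix (Fin.last m) v hv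
  set A : Matrix (Fin (m + 1)) (Fin (m + 1)) ℂ := A0.map (algebraMap QQ ℂ) with hA
  set B : Matrix (Fin (m + 1)) (Fin (m + 1)) ℂ := B0.map (algebraMap QQ ℂ) with hB
  have hAB : A * B = 1 := by
    rw [hA, hB, ← Matrix.map_mul, hAB0, Matrix.map_one _ (map_zero _) (map_one _)]
  have hBA : B * A = 1 := by
    rw [hA, hB, ← Matrix.map_mul, hBA0, Matrix.map_one _ (map_zero _) (map_one _)]
  set ξ' := B.mulVec ξ with hξ'
  have hAξ : A.mulVec ξ' = ξ := by rw [hξ', Matrix.mulVec_mulVec, hAB, Matrix.one_mulVec]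
  have hlin : LinIndepOverQbar (m + 1) ξ' :=
    linIndep_transfer A B hBA (fun i j => mem_QQ.1 (SetLike.coe_mem (B0 i j))) ξ hξ
  have hinv1 : ∀ p, sig A (sig B p) = p := fun p => by rw [sig_comp, hBA, sig_one]
  have hinv2 : ∀ p, sig B (sig A p) = p := fun p => by rw [sig_comp, hAB, sig_one]
  have hsinj : Function.Injective (sig A) := Function.LeftInverse.injective hinv2
  let θ : MvPolynomial (Fin (m + 1)) ℂ →ₗ[ℂ] PW (m + 1) := Psi (m + 1) ∘ₗ (sig A).toLinearMap
  have hθ : ∀ p, θ p = Psi (m + 1) (sig A p) := fun p => rfl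
  have hθinj : Function.Injective θ := (Psi_inj _).comp hsinj
  have hhc : ∀ d p, MvPolynomial.homogeneousComponent d (sig A p) = 0 ↔
      MvPolynomial.homogeneousComponent d p = 0 := fun d p => by
    rw [sig_hc, map_eq_zero_iff _ hsinj]
  have hΩ : ∀ p, θ p ∈ OmegaSpace (m + 1) N ↔ Psi _ p ∈ OmegaSpace (m + 1) N := fun p => by
    rw [hθ, mem_comap_Omega, mem_comap_Omega]; simp only [hhc]
  have hFF : ∀ p, Psi _ p ∈ OmegaSpace (m + 1) N →
      (θ p ∈ Fspace (m + 1) N ξ' ↔ Psi _ p ∈ Fspace (m + 1) N ξ) := fun p hp => by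
    rw [hθ, mem_comap_F hN ξ' (sig A p) ((hΩ p).2 hp), mem_comap_F hN ξ _ hp, sig_DP, hAξ, ← map_sub, hhc]
  have hlast : A.mulVec (Pi.single (Fin.last m) 1) = fun i => (v i : ℂ) := by
    ext i
    rw [Matrix.mulVec_single_one, Matrix.col_apply, hA, Matrix.map_apply, hA0]; rfl
  have hpd : ∀ p μ, θ p (μ + ee (Fin.last m)) =
      Psi _ (sig A (DP (fun i => (v i : ℂ)) p)) μ := fun p μ => by
    rw [hθ, ← Psi_pderiv, ← hlast, ← sig_DP, DP_apply]
    congr 2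
    rw [Finset.sum_eq_single (Fin.last m)]
    · simp
    · intro b _ hb; simp [hb]
    · simp
  set Rp := R.comap (Psi (m + 1)) with hRp
  have hRmap : Rp.map (Psi (m + 1)) = R := by
    rw [hRp, Submodule.map_comap_eq, inf_eq_right]
    exact hR.trans (Omega_le_range _ _)
  set R' := Rp.map θ with hR'
  have hR'Ω : R' ≤ OmegaSpace (m + 1) N := by
    rintro _ ⟨p, hp, rfl⟩
    exact (hΩ p).2 (hR hp)
  have fr : ∀ S : Submodule ℂ (MvPolynomial (Fin (m + 1)) ℂ),
      Module.finrank ℂ ↥(S.map θ) = Module.finrank ℂ ↥(S.map (Psi (m + 1))) := fun S => by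
    rw [← (Submodule.equivMapOfInjective θ hθinj S).finrank_eq,
      ← (Submodule.equivMapOfInjective _ (Psi_inj _) S).finrank_eq]
  have fr1 : Module.finrank ℂ R' = Module.finrank ℂ R := by rw [hR', fr, hRmap]
  have hFR : Fspace (m + 1) N ξ ⊓ R =
      (Rp ⊓ (Fspace (m + 1) N ξ).comap (Psi (m + 1))).map (Psi (m + 1)) := by
    rw [← Submodule.map_inf_eq_map_inf_comap, hRmap, inf_comm]
  have hFR' : Fspace (m + 1) N ξ' ⊓ R' =
      (Rp ⊓ (Fspace (m + 1) N ξ).comap (Psi (m + 1))).map θ := by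
    have : Rp ⊓ (Fspace (m + 1) N ξ).comap (Psi (m + 1)) =
        Rp ⊓ (Fspace (m + 1) N ξ').comap θ := by
      ext p
      simp only [Submodule.mem_inf, Submodule.mem_comap]
      exact and_congr_right fun hp => (hFF p (hR hp)).symm
    rw [this, ← Submodule.map_inf_eq_map_inf_comap, inf_comm]
  have fr2 : Module.finrank ℂ ↥(Fspace (m + 1) N ξ' ⊓ R') =
      Module.finrank ℂ ↥(Fspace (m + 1) N ξ ⊓ R) := by rw [hFR, hFR', fr]
  have hQ' : DefinedOverQbar R' := by
    obtain ⟨s, hs, hsR⟩ := hQ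
    refine ⟨θ '' (Psi (m + 1) ⁻¹' s), ?_, ?_⟩
    · rintro _ ⟨p, hp, rfl⟩ κ
      exact alg_coeff A0 p (hs _ hp) κ
    · rw [Submodule.span_image, hR']
      congr 1
      apply Submodule.map_injective_of_injective (Psi_inj (m + 1))
      rw [hRmap, ← Submodule.span_image, Set.image_preimage_eq_of_subset, hsR]
      intro x hx
      exact Omega_le_range _ _ (hR (hsR ▸ Submodule.subset_span hx))
  have hK : (Module.finrank ℂ ↥((Fspace (m + 1) N ξ ⊓ R) ⊓
          LinearMap.ker (resT (m + 1) N ∘ₗ Dop (fun i => (v i : ℂ))))) ≤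
      Module.finrank ℂ ↥(Fspace (m + 1) N ξ' ⊓ R' ⊓ Kspace (m + 1) N (Fin.last m)) := by
    rw [hFR, Submodule.map_inf_eq_map_inf_comap, ← fr]
    have : FiniteDimensional ℂ
        ↥(Fspace (m + 1) N ξ' ⊓ R' ⊓ Kspace (m + 1) N (Fin.last m)) :=
      Submodule.finiteDimensional_of_le ((inf_le_left.trans inf_le_right).trans hR'Ω)
    refine Submodule.finrank_mono ?_
    rintro _ ⟨p, ⟨hp1, hp2⟩, rfl⟩
    have h1 : θ p ∈ Fspace (m + 1) N ξ' ⊓ R' := by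
      rw [hFR']; exact ⟨p, hp1, rfl⟩
    refine ⟨h1, mem_K_of hN ξ' _ _ (hR'Ω h1.2) h1.1 ?_⟩
    have h2 : ∀ μ, wt μ = N - 1 → Dop (fun i => (v i : ℂ)) (Psi _ p) μ = 0 :=
      (mem_ker_resT _ _).1 hp2
    rw [← Psi_DP, ← Psi_hc, ← hhc, Psi_hc] at h2
    intro μ hμ
    rw [hpd]; exact h2 μ hμ
  have hfin := H ξ' hlin R' hR'Ω hQ' (by
    rw [fr1, fr2, sub_le_iff_le_add]
    have : 2 * Module.finrank ℂ ↥(Fspace (m + 1) N ξ ⊓ R) ≤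
      Module.finrank ℂ ↥(Fspace (m + 1) N ξ' ⊓ R' ⊓ Kspace (m + 1) N (Fin.last m)) +
        Module.finrank ℂ R := by
      refine hdim.trans ?_
      rw [add_comm]
      exact Nat.add_le_add_right hK _
    exact_mod_cast this)
  have hbot : R' = ⊥ ↔ R = ⊥ := by
    have e1 : R' = ⊥ ↔ Rp = ⊥ := by
      conv_lhs => rw [hR', ← Submodule.map_bot θ]
      exact (Submodule.map_injective_of_injective hθinj).eq_iff
    have e2 : R = ⊥ ↔ Rp = ⊥ := by
      conv_lhs => rw [← hRmap, ← Submodule.map_bot (Psi (m + 1))]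
      exact (Submodule.map_injective_of_injective (Psi_inj _)).eq_iff
    rw [e1, e2]
  have htop : R' = OmegaSpace (m + 1) N ↔ R = OmegaSpace (m + 1) N := by
    have e1 : OmegaSpace (m + 1) N =
        ((OmegaSpace (m + 1) N).comap (Psi (m + 1))).map (Psi (m + 1)) := by
      rw [Submodule.map_comap_eq, inf_eq_right.2 (Omega_le_range _ _)]
    have e2 : OmegaSpace (m + 1) N =
        ((OmegaSpace (m + 1) N).comap (Psi (m + 1))).map θ := by
      have : (OmegaSpace (m + 1) N).comap (Psi (m + 1)) = (OmegaSpace (m + 1) N).comap θ := by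
        ext p; exact (hΩ p).symm
      rw [this, Submodule.map_comap_eq, inf_eq_right.2]
      intro x hx
      obtain ⟨p, rfl⟩ := Omega_le_range _ _ hx
      exact ⟨sig B p, by rw [hθ, hinv1]⟩
    have e3 : R' = OmegaSpace (m + 1) N ↔ Rp = (OmegaSpace (m + 1) N).comap (Psi (m + 1)) := by
      conv_lhs => rw [e2]
      exact (Submodule.map_injective_of_injective hθinj).eq_iff
    have e4 : R = OmegaSpace (m + 1) N ↔ Rp = (OmegaSpace (m + 1) N).comap (Psi (m + 1)) := by
      conv_lhs => rw [← hRmap, e1]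
      exact (Submodule.map_injective_of_injective (Psi_inj _)).eq_iff
    rw [e3, e4]
  unfold RatIneq at hfin ⊢
  rw [fr1, fr2, hbot, htop] at hfin
  exact hfin

/-- **Lemma 5.3.** Let `m, N ≥ 1` (here the number of variables is `m + 1 ≥ 1`) and
`K = Span{E_κ : κ ∈ Ω, κ_m = 0}`. If the dimension inequality of Theorem 5.1 (with its
case of equality) holds for every `ξ` with `1, ξ₁, …, ξ_m` linearly independent over
`ℚ̄` and every subspace `R ⊆ ℂ^Ω` defined over `ℚ̄` satisfying
`dim(F ∩ R ∩ K) ≥ 2·dim(F ∩ R) - dim R`, then it holds for every such `ξ` and every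
subspace `R ⊆ ℂ^Ω` defined over `ℚ̄`. -/
theorem dimension_inequality_reduction_to_K_condition
    (m N : ℕ) (hN : 1 ≤ N)
    (H : ∀ ξ : Fin (m + 1) → ℂ, LinIndepOverQbar (m + 1) ξ →
      ∀ R : Submodule ℂ ((Fin (m + 1) → ℕ) → ℂ), R ≤ OmegaSpace (m + 1) N →
        DefinedOverQbar R →
        2 * (Module.finrank ℂ ↥(Fspace (m + 1) N ξ ⊓ R) : ℝ) -
            (Module.finrank ℂ ↥R : ℝ) ≤
          (Module.finrank ℂ ↥(Fspace (m + 1) N ξ ⊓ R ⊓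
              Kspace (m + 1) N (Fin.last m)) : ℝ) →
        RatIneq (m + 1) N ξ R) :
    ∀ ξ : Fin (m + 1) → ℂ, LinIndepOverQbar (m + 1) ξ →
      ∀ R : Submodule ℂ ((Fin (m + 1) → ℕ) → ℂ), R ≤ OmegaSpace (m + 1) N →
        DefinedOverQbar R → RatIneq (m + 1) N ξ R := by
  exact main_aux m N hN H
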